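/- Let H ≤ G be a subgroup of a finite group G. Suppose there exists n ∈ ℕ such that for all irreducible complex characters ψ, φ of G one has ⟨Res_H ψ, Res_H φ⟩_H ≤ n · ⟨ψ, φ⟩_G, where ⟨χ, χ'⟩_K = (1/|K|) Σ_{k∈K} χ(k) · conj(χ'(k)) is the usual inner product of class functions on a finite group K and Res_H denotes restriction of characters to H. Then H = G. (By Frobenius reciprocity this hypothesis is equivalent to the condition ⟨Ind_H^G Res_H ψ, φ⟩_G ≤ n · ⟨ψ, φ⟩_G, which expresses H-separability of ℂ[G] over ℂ[H].) -/

import Mathlib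

open CategoryTheory
open scoped ComplexOrder

/-- The usual inner product of class functions on a finite group `K`:
`⟨χ, χ'⟩_K = (1/|K|) ∑_{k ∈ K} χ(k) * conj(χ'(k))`. -/
noncomputable def charInner (K : Type*) [Group K] [Fintype K] (χ χ' : K → ℂ) : ℂ :=
  (Fintype.card K : ℂ)⁻¹ * ∑ k : K, χ k * (starRingEnd ℂ) (χ' k)

/-- An atom in the lattice of subrepresentations is irreducible as a representation. -/
theorem Subrepresentation.isIrreducible_of_isAtom {k G V : Type*} [Field k] [Monoid G]
    [AddCommGroup V] [Module k V] {ρ : Representation k G V} {a : Subrepresentation ρ}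
    (ha : IsAtom a) : a.toRepresentation.IsIrreducible := by
  let lift : Subrepresentation a.toRepresentation → Subrepresentation ρ := fun σ =>
    { toSubmodule := σ.toSubmodule.map a.toSubmodule.subtype
      apply_mem_toSubmodule := by
        rintro g _ ⟨v, hv, rfl⟩
        exact ⟨a.toRepresentation g v, σ.apply_mem_toSubmodule g hv, rfl⟩ }
  have lift_inj : Function.Injective lift := fun σ τ h =>
    toSubmodule_injective
      (Submodule.map_injective_of_injective a.toSubmodule.injective_subtype
        (congrArg toSubmodule h))
  have lift_bot : lift ⊥ = ⊥ := toSubmodule_injective (Submodule.map_bot _)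
  have lift_top : lift ⊤ = a := toSubmodule_injective (Submodule.map_subtype_top _)
  have lift_le (σ) : lift σ ≤ a := Submodule.map_subtype_le a.toSubmodule σ.toSubmodule
  exact
    { exists_pair_ne := ⟨⊥, ⊤, fun h => ha.1 (by rw [← lift_top, ← h, lift_bot])⟩
      eq_bot_or_eq_top := fun σ => (ha.le_iff.1 (lift_le σ)).imp
        (fun h => lift_inj (h.trans lift_bot.symm)) (fun h => lift_inj (h.trans lift_top.symm)) }

/-- Every nonzero subrepresentation of a finite-dimensional representation contains an irreducible
subrepresentation. -/
theorem Subrepresentation.exists_isIrreducible_le {k G V : Type*} [Field k] [Monoid G]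
    [AddCommGroup V] [Module k V] [FiniteDimensional k V] {ρ : Representation k G V}
    {U : Subrepresentation ρ} (hU : U ≠ ⊥) :
    ∃ a ≤ U, a ≠ ⊥ ∧ a.toRepresentation.IsIrreducible := by
  have : WellFoundedLT (Subrepresentation ρ) :=
    StrictMono.wellFoundedLT (f := toSubmodule) fun _ _ h => h
  obtain ⟨a, ha, hle⟩ := (IsAtomic.eq_bot_or_exists_atom_le U).resolve_left hU
  exact ⟨a, hle, ha.1, isIrreducible_of_isAtom ha⟩

/-- An irreducible representation of a finite group is a simple object of `FDRep`. -/
theorem FDRep.simple_of_isIrreducible {k G V : Type} [Field k] [IsAlgClosed k] [CharZero k]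
    [Group G] [Finite G] [AddCommGroup V] [Module k V] [FiniteDimensional k V]
    (ρ : Representation k G V) [ρ.IsIrreducible] : Simple (FDRep.of ρ) := by
  have := Fintype.ofFinite G
  have hcard : (Nat.card G : k) ≠ 0 := Nat.cast_ne_zero.2 Nat.card_pos.ne'
  have := invertibleOfNonzero hcard
  rw [FDRep.simple_iff_char_is_norm_one]
  have h := Representation.char_orthonormal ρ ρ
  rw [if_pos ⟨Representation.Equiv.refl ρ⟩, inv_mul_eq_iff_eq_mul₀ hcard] at h
  simpa using! h

/-- The character of the one-dimensional trivial representation is constantly one. -/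
theorem FDRep.character_of_trivial (k : Type) {G : Type} [Field k] [Group G] (g : G) :
    (FDRep.of (Representation.trivial k G k)).character g = 1 := by
  have : (Representation.trivial k G k).character g = 1 := by
    simp [Representation.character, Representation.trivial]
  exact this

theorem FDRep.simple_of_trivial (k : Type) (G : Type) [Field k] [IsAlgClosed k] [CharZero k]
    [Group G] [Finite G] : Simple (FDRep.of (Representation.trivial k G k)) := by
  have := Fintype.ofFinite G
  rw [FDRep.simple_iff_char_is_norm_one]
  simp [FDRep.character_of_trivial]

/-- The inner product of a character with the trivial one is the dimension of the invariants. -/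
theorem charInner_character_one {K V : Type*} [Group K] [Fintype K] [AddCommGroup V] [Module ℂ V]
    [FiniteDimensional ℂ V] (ρ : Representation ℂ K V) :
    charInner K ρ.character (fun _ => 1) = Module.finrank ℂ ρ.invariants := by
  have := invertibleOfNonzero (Nat.cast_ne_zero (R := ℂ).2 (Nat.card_pos (α := K)).ne')
  rw [← Representation.card_inv_mul_sum_char_eq_finrank]
  simp [charInner]

/-- The functions on a finite `G`-set whose values sum to zero. -/
noncomputable def sumZeroSubrepresentation (k G X : Type*) [Field k] [Group G] [MulAction G X]
    [Fintype X] : Subrepresentation (Representation.ofMulAction k G X) where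
  toSubmodule :=
    { carrier := {f | ∑ x, f.coeff x = 0}
      add_mem' := fun {f g} hf hg => by
        simp_all [Finset.sum_add_distrib]
      zero_mem' := by simp
      smul_mem' := fun c f hf => by
        simp_all [← Finset.mul_sum] }
  apply_mem_toSubmodule g f hf := by
    change ∑ x, _ = _
    simp only [Representation.coeff_ofMulAction]
    exact (Equiv.sum_comp (MulAction.toPerm g⁻¹) fun x => f.coeff x).trans hf

/-- A subrepresentation of the sum-zero functions on a transitive `G`-set has no nonzero
invariants. -/
theorem invariants_eq_bot_of_le_sumZero {k G X : Type*} [Field k] [CharZero k] [Group G]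
    [MulAction G X] [MulAction.IsPretransitive G X] [Fintype X]
    {a : Subrepresentation (Representation.ofMulAction k G X)}
    (ha : a ≤ sumZeroSubrepresentation k G X) : a.toRepresentation.invariants = ⊥ := by
  rw [Submodule.eq_bot_iff]
  rintro ⟨f, hfa⟩ hf
  have hconst (x y : X) : f.coeff x = f.coeff y := by
    obtain ⟨g, rfl⟩ := MulAction.exists_smul_eq G x y
    have h : Representation.ofMulAction k G X g⁻¹ f = f := congrArg Subtype.val (hf g⁻¹)
    simpa using! congrArg (fun u => u.coeff x) h.symm
  have hsum : ∑ x, f.coeff x = 0 := ha hfa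
  ext x
  rw [Finset.sum_congr rfl fun y _ => hconst y x] at hsum
  have : Nonempty X := ⟨x⟩
  simpa using hsum

/-- A nonzero subrepresentation of the functions on a transitive `G`-set has nonzero vectors fixed
by any given point stabilizer, or any finite subgroup thereof. -/
theorem invariants_comp_subtype_ne_bot {k G X : Type*} [Field k] [CharZero k] [Group G]
    [MulAction G X] [MulAction.IsPretransitive G X] {x₀ : X} {H : Subgroup G} [Fintype H]
    (hH : H ≤ MulAction.stabilizer G x₀)
    {a : Subrepresentation (Representation.ofMulAction k G X)} (ha : a ≠ ⊥) :
    Representation.invariants (a.toRepresentation.comp H.subtype : Representation k H _) ≠ ⊥ := by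
  obtain ⟨f, hfa, hf⟩ : ∃ f ∈ a.toSubmodule, f ≠ 0 :=
    a.toSubmodule.exists_mem_ne_zero_of_ne_bot
      fun h => ha (Subrepresentation.toSubmodule_injective h)
  obtain ⟨x, hx⟩ : ∃ x, f.coeff x ≠ 0 := by
    by_contra! h
    exact hf (by ext x; simpa using h x)
  obtain ⟨g, rfl⟩ := MulAction.exists_smul_eq G x₀ x
  let v : a.toSubmodule := a.toRepresentation g⁻¹ ⟨f, hfa⟩
  have hv (h : H) : (a.toRepresentation (h : G) v : MonoidAlgebra k X).coeff x₀ =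
      f.coeff (g • x₀) := by
    change (Representation.ofMulAction k G X h (Representation.ofMulAction k G X g⁻¹ f)).coeff x₀
      = _
    have : (h : G)⁻¹ • x₀ = x₀ := hH (H.inv_mem h.2)
    simp [this]
  intro hbot
  have hmem : ∑ h : H, a.toRepresentation (h : G) v ∈
      Representation.invariants (a.toRepresentation.comp H.subtype : Representation k H _) := by
    intro h
    change a.toRepresentation (h : G) _ = _
    rw [map_sum, ← Equiv.sum_comp (Equiv.mulLeft h) fun l : H => a.toRepresentation (l : G) v]
    simp
  rw [hbot, Submodule.mem_bot] at hmem
  have hcoeff := congrArg (fun u : a.toSubmodule => (u : MonoidAlgebra k X).coeff x₀) hmem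
  simp [MonoidAlgebra.coeff_sum, hv, hx] at hcoeff

theorem sumZeroSubrepresentation_ne_bot (k G X : Type*) [Field k] [Group G] [MulAction G X]
    [Fintype X] [Nontrivial X] : sumZeroSubrepresentation k G X ≠ ⊥ := by
  classical
  obtain ⟨x, y, hxy⟩ := exists_pair_ne X
  intro h
  let f : MonoidAlgebra k X := .single x 1 - .single y 1
  have hf : f ∈ (sumZeroSubrepresentation k G X).toSubmodule := by
    change ∑ z, f.coeff z = 0
    simp [f, Finsupp.single_apply]
  rw [h] at hf
  have hf : f = 0 := hf
  simpa [f, hxy, hxy.symm] using congrArg (fun u => u.coeff x) hf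

/-- Let `H ≤ G` be a subgroup of a finite group `G`.  If there is an `n ∈ ℕ` such that
`⟨Res_H ψ, Res_H φ⟩_H ≤ n * ⟨ψ, φ⟩_G` for all irreducible complex characters `ψ, φ` of `G`
(a reformulation, via Frobenius reciprocity, of the H-separability of `ℂ[G]` over `ℂ[H]`),
then `H = G`. -/
theorem subgroup_eq_top_of_res_inner_le {G : Type} [Group G] [Fintype G] (H : Subgroup G) [Fintype H]
    (hn : ∃ n : ℕ, ∀ (V W : FDRep ℂ G), Simple V → Simple W →
      charInner H (fun h => V.character h) (fun h => W.character h) ≤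
        (n : ℂ) * charInner G V.character W.character) :
    H = ⊤ := by
  obtain ⟨n, hn⟩ := hn
  by_contra hH
  have : Nontrivial (G ⧸ H) := QuotientGroup.nontrivial_iff.2 hH
  have := Fintype.ofFinite (G ⧸ H)
  have : FiniteDimensional ℂ (MonoidAlgebra ℂ (G ⧸ H)) :=
    Module.Finite.equiv (MonoidAlgebra.coeffLinearEquiv ℂ).symm
  obtain ⟨a, hle, ha, hirr⟩ := Subrepresentation.exists_isIrreducible_le
    (sumZeroSubrepresentation_ne_bot ℂ G (G ⧸ H))
  have key := hn (FDRep.of a.toRepresentation) (FDRep.of (Representation.trivial ℂ G ℂ))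
    (FDRep.simple_of_isIrreducible _) (FDRep.simple_of_trivial ℂ G)
  have hG : charInner G (FDRep.of a.toRepresentation).character
      (FDRep.of (Representation.trivial ℂ G ℂ)).character = 0 := by
    rw [funext (FDRep.character_of_trivial ℂ (G := G))]
    refine (charInner_character_one a.toRepresentation).trans ?_
    rw [invariants_eq_bot_of_le_sumZero hle, finrank_bot, Nat.cast_zero]
  rw [hG, mul_zero] at key
  simp only [FDRep.character_of_trivial] at key
  have key := (charInner_character_one (a.toRepresentation.comp H.subtype)).symm.trans_le key
  refine invariants_comp_subtype_ne_bot (x₀ := ((1 : G) : G ⧸ H)) (H := H) ?_ ha ?_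
  · intro h hh
    simpa [MulAction.mem_stabilizer_iff, QuotientGroup.eq] using hh
  · rw [← Submodule.finrank_eq_zero (R := ℂ)]
    exact_mod_cast key.antisymm (Nat.cast_nonneg _)
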